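/- Let (ℝ⁴, g(t)) for t ∈ [0,T), T < ∞, be a warped Berger Ricci flow with bounded curvature such that b_s ≥ 0 and H ≥ 0 hold along the flow, and suppose there are x̃₂ > 0, δ > 0, t̃ ∈ [0,T), ε > 0 and α > 0 with: c·H(x̃₂,t) ≥ δ for all t ∈ [t̃,T), c·H(x,t̃) ≥ δ for all 0 < x ≤ x̃₂, c/b ≥ ε on {0 < x ≤ x̃₂} × [t̃,T), and |c_s/c − b_s/b| ≤ α on {0 < x ≤ x̃₂} × [t̃,T). Then there exists μ > 0 such that c·H(x,t) ≥ μ for all 0 < x ≤ x̃₂ and all t ∈ [t̃,T). -/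

import Mathlib

open Set Filter Topology MeasureTheory

noncomputable section

/-- Spatial derivative with respect to arclength: `f_s = ξ⁻¹ ∂ₓ f`. -/
def dS (ξ f : ℝ → ℝ → ℝ) (x t : ℝ) : ℝ := (ξ x t)⁻¹ * deriv (fun y => f y t) x

/-- A warped Berger Ricci flow on `ℝ⁴` over `[0,T)`, described by smooth positive radial
functions `ξ, b, c` of the radial coordinate `x ∈ (0,∞)` and time `t ∈ [0,T)`,
satisfying the Ricci flow equations, completeness, the smoothness boundary conditions
at the origin of `ℝ⁴`, and the Berger ordering `c ≤ b` at `t = 0`. -/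
structure WarpedBergerFlow where
  T : ℝ
  T_pos : 0 < T
  ξ : ℝ → ℝ → ℝ
  b : ℝ → ℝ → ℝ
  c : ℝ → ℝ → ℝ
  smooth_ξ : ContDiffOn ℝ (⊤ : ℕ∞) (fun p : ℝ × ℝ => ξ p.1 p.2) (Ioi 0 ×ˢ Ico 0 T)
  smooth_b : ContDiffOn ℝ (⊤ : ℕ∞) (fun p : ℝ × ℝ => b p.1 p.2) (Ioi 0 ×ˢ Ico 0 T)
  smooth_c : ContDiffOn ℝ (⊤ : ℕ∞) (fun p : ℝ × ℝ => c p.1 p.2) (Ioi 0 ×ˢ Ico 0 T)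
  ξ_pos : ∀ x > 0, ∀ t ∈ Ico (0:ℝ) T, 0 < ξ x t
  b_pos : ∀ x > 0, ∀ t ∈ Ico (0:ℝ) T, 0 < b x t
  c_pos : ∀ x > 0, ∀ t ∈ Ico (0:ℝ) T, 0 < c x t
  /-- Ricci flow equation for `b`:
  `b_t = b_ss + (c_s/c + b_s/b) b_s + 2(c² − 2b²)/b³`. -/
  eq_b : ∀ x > 0, ∀ t ∈ Ico (0:ℝ) T,
    deriv (fun u => b x u) t =
      dS ξ (dS ξ b) x t + (dS ξ c x t / c x t + dS ξ b x t / b x t) * dS ξ b x t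
        + 2 * ((c x t) ^ 2 - 2 * (b x t) ^ 2) / (b x t) ^ 3
  /-- Ricci flow equation for `c`: `c_t = c_ss + 2 (b_s/b) c_s − 2c³/b⁴`. -/
  eq_c : ∀ x > 0, ∀ t ∈ Ico (0:ℝ) T,
    deriv (fun u => c x u) t =
      dS ξ (dS ξ c) x t + 2 * (dS ξ b x t / b x t) * dS ξ c x t
        - 2 * (c x t) ^ 3 / (b x t) ^ 4
  /-- Ricci flow equation for `ξ`: `ξ_t = −ξ (2 b_ss/b + c_ss/c)`. -/
  eq_ξ : ∀ x > 0, ∀ t ∈ Ico (0:ℝ) T,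
    deriv (fun u => ξ x u) t =
      -(ξ x t) * (2 * dS ξ (dS ξ b) x t / b x t + dS ξ (dS ξ c) x t / c x t)
  /-- Completeness: the arclength `s(x,t) = ∫₀ˣ ξ(y,t) dy` tends to `∞` as `x → ∞`. -/
  complete : ∀ t ∈ Ico (0:ℝ) T,
    Tendsto (fun x => ∫ y in (0:ℝ)..x, ξ y t) atTop atTop
  /-- Smoothness at the origin: `b → 0` as `x → 0⁺`. -/
  b_origin : ∀ t ∈ Ico (0:ℝ) T, Tendsto (fun x => b x t) (𝓝[>] 0) (𝓝 0)
  c_origin : ∀ t ∈ Ico (0:ℝ) T, Tendsto (fun x => c x t) (𝓝[>] 0) (𝓝 0)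
  /-- Smoothness at the origin: `b_s → 1` as `x → 0⁺`. -/
  bs_origin : ∀ t ∈ Ico (0:ℝ) T, Tendsto (fun x => dS ξ b x t) (𝓝[>] 0) (𝓝 1)
  cs_origin : ∀ t ∈ Ico (0:ℝ) T, Tendsto (fun x => dS ξ c x t) (𝓝[>] 0) (𝓝 1)
  /-- The Berger ordering `c ≤ b` holds at `t = 0`. -/
  ordered_init : ∀ x > 0, c x 0 ≤ b x 0

namespace WarpedBergerFlow

variable (F : WarpedBergerFlow)

/-- `b_s`. -/
def bS : ℝ → ℝ → ℝ := dS F.ξ F.b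
/-- `c_s`. -/
def cS : ℝ → ℝ → ℝ := dS F.ξ F.c
/-- `b_ss`. -/
def bSS : ℝ → ℝ → ℝ := dS F.ξ (dS F.ξ F.b)
/-- `c_ss`. -/
def cSS : ℝ → ℝ → ℝ := dS F.ξ (dS F.ξ F.c)

/-- Sectional curvature `k12 = (4b² − 3c²)/b⁴ − b_s²/b²`. -/
def k12 (x t : ℝ) : ℝ :=
  (4 * (F.b x t) ^ 2 - 3 * (F.c x t) ^ 2) / (F.b x t) ^ 4 - (F.bS x t) ^ 2 / (F.b x t) ^ 2
/-- Sectional curvature `k13 = c²/b⁴ − b_s c_s/(b c)`. -/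
def k13 (x t : ℝ) : ℝ :=
  (F.c x t) ^ 2 / (F.b x t) ^ 4 - F.bS x t * F.cS x t / (F.b x t * F.c x t)
/-- Sectional curvature `k01 = −b_ss/b`. -/
def k01 (x t : ℝ) : ℝ := -(F.bSS x t) / F.b x t
/-- Sectional curvature `k03 = −c_ss/c`. -/
def k03 (x t : ℝ) : ℝ := -(F.cSS x t) / F.c x t
/-- `|Rm| = |k12| + |k13| + |k01| + |k03|`. -/
def RmNorm (x t : ℝ) : ℝ := |F.k12 x t| + |F.k13 x t| + |F.k01 x t| + |F.k03 x t|
/-- Mean curvature of the Euclidean hypersphere of radius `x`: `H = 2 b_s/b + c_s/c`. -/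
def meanH (x t : ℝ) : ℝ := 2 * F.bS x t / F.b x t + F.cS x t / F.c x t

/-- Bounded curvature: `|Rm|` is bounded on `(0,∞) × [0,t₀]` for every `t₀ < T`. -/
def BoundedCurvature : Prop :=
  ∀ t₀ ∈ Ico (0:ℝ) F.T, ∃ C : ℝ, ∀ x > 0, ∀ t ∈ Icc (0:ℝ) t₀, F.RmNorm x t ≤ C

/-- The initial metric belongs to the class `𝒢`: at `t = 0`, `b_s ≥ 0` and `H ≥ 0`
everywhere, `b(·,0)` is bounded, and `|Rm|(·,0)` is bounded. -/
def InG : Prop :=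
  (∀ x > 0, 0 ≤ F.bS x 0) ∧ (∀ x > 0, 0 ≤ F.meanH x 0) ∧
  (∃ M : ℝ, ∀ x > 0, F.b x 0 ≤ M) ∧ (∃ C : ℝ, ∀ x > 0, F.RmNorm x 0 ≤ C)

end WarpedBergerFlow

/-! ### Smooth functions on the space-time domain -/

/-- Smoothness on `(0,∞) × [0,T)`. -/
def Sm (T : ℝ) (f : ℝ → ℝ → ℝ) : Prop :=
  ContDiffOn ℝ (⊤ : ℕ∞) (fun p : ℝ × ℝ => f p.1 p.2) (Ioi 0 ×ˢ Ico 0 T)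

theorem uniqueDiffOn_dom (T : ℝ) : UniqueDiffOn ℝ (Ioi (0:ℝ) ×ˢ Ico (0:ℝ) T) :=
  (uniqueDiffOn_Ioi 0).prod (uniqueDiffOn_Ico 0 T)

namespace Sm

variable {T : ℝ} {f g : ℝ → ℝ → ℝ}

theorem continuousOn (hf : Sm T f) :
    ContinuousOn (fun p : ℝ × ℝ => f p.1 p.2) (Ioi 0 ×ˢ Ico 0 T) :=
  ContDiffOn.continuousOn hf

theorem deriv_x_eq (hf : Sm T f) {x t : ℝ} (hx : 0 < x) (ht : t ∈ Ico 0 T) :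
    HasDerivAt (fun y => f y t)
      (fderivWithin ℝ (fun p : ℝ × ℝ => f p.1 p.2) (Ioi 0 ×ˢ Ico 0 T) (x, t) (1, 0)) x := by
  have h1 : HasFDerivWithinAt (fun p : ℝ × ℝ => f p.1 p.2) _ (Ioi 0 ×ˢ Ico 0 T) (x, t) :=
    ((ContDiffOn.differentiableOn hf (by simp)) (x, t) ⟨hx, ht⟩).hasFDerivWithinAt
  have h2 : HasDerivWithinAt (fun y : ℝ => (y, t)) ((1:ℝ), (0:ℝ)) (Ioi 0) x :=
    ((hasDerivAt_id x).prodMk (hasDerivAt_const x t)).hasDerivWithinAt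
  have h3 := HasFDerivWithinAt.comp_hasDerivWithinAt (t := Ioi 0 ×ˢ Ico 0 T) x h1 h2
    (fun y hy => ⟨hy, ht⟩)
  exact h3.hasDerivAt (Ioi_mem_nhds hx)

theorem hasDerivAt_x (hf : Sm T f) {x t : ℝ} (hx : 0 < x) (ht : t ∈ Ico 0 T) :
    HasDerivAt (fun y => f y t) (deriv (fun y => f y t) x) x :=
  (hf.deriv_x_eq hx ht).differentiableAt.hasDerivAt

theorem contDiffAt (hf : Sm T f) {x t : ℝ} (hx : 0 < x) (ht : t ∈ Ioo 0 T) :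
    ContDiffAt ℝ (⊤ : ℕ∞) (fun p : ℝ × ℝ => f p.1 p.2) (x, t) :=
  ContDiffOn.contDiffAt hf (prod_mem_nhds (Ioi_mem_nhds hx) (Ico_mem_nhds ht.1 ht.2))

theorem hasDerivAt_x_fderiv (hf : Sm T f) {x t : ℝ} (hx : 0 < x) (ht : t ∈ Ioo 0 T) :
    HasDerivAt (fun y => f y t) (fderiv ℝ (fun p : ℝ × ℝ => f p.1 p.2) (x, t) (1, 0)) x := by
  have h1 := ((hf.contDiffAt hx ht).differentiableAt (by simp)).hasFDerivAt
  have h2 : HasDerivAt (fun y : ℝ => (y, t)) ((1:ℝ), (0:ℝ)) x :=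
    ((hasDerivAt_id x).prodMk (hasDerivAt_const x t))
  exact HasFDerivAt.comp_hasDerivAt x h1 h2

theorem hasDerivAt_t_fderiv (hf : Sm T f) {x t : ℝ} (hx : 0 < x) (ht : t ∈ Ioo 0 T) :
    HasDerivAt (fun u => f x u) (fderiv ℝ (fun p : ℝ × ℝ => f p.1 p.2) (x, t) (0, 1)) t := by
  have h1 := ((hf.contDiffAt hx ht).differentiableAt (by simp)).hasFDerivAt
  have h2 : HasDerivAt (fun u : ℝ => (x, u)) ((0:ℝ), (1:ℝ)) t :=
    ((hasDerivAt_const t x).prodMk (hasDerivAt_id t))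
  exact HasFDerivAt.comp_hasDerivAt t h1 h2

theorem hasDerivAt_t (hf : Sm T f) {x t : ℝ} (hx : 0 < x) (ht : t ∈ Ioo 0 T) :
    HasDerivAt (fun u => f x u) (deriv (fun u => f x u) t) t :=
  (hf.hasDerivAt_t_fderiv hx ht).differentiableAt.hasDerivAt

theorem dx (hf : Sm T f) : Sm T (fun x t => deriv (fun y => f y t) x) := by
  have h := ContDiffOn.fderivWithin (m := ((⊤ : ℕ∞) : WithTop ℕ∞)) hf (uniqueDiffOn_dom T)
    (by simp)
  have h2 := h.clm_apply (contDiffOn_const (c := ((1:ℝ), (0:ℝ))))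
  refine ContDiffOn.congr h2 ?_
  rintro ⟨x, t⟩ ⟨hx, ht⟩
  exact (hf.deriv_x_eq hx ht).deriv

theorem symm (hf : Sm T f) {x t : ℝ} (hx : 0 < x) (ht : t ∈ Ioo 0 T) :
    deriv (fun u => deriv (fun y => f y u) x) t = deriv (fun y => deriv (fun u => f y u) t) x := by
  set φ : ℝ × ℝ → ℝ := fun p => f p.1 p.2 with hφ
  have hc := hf.contDiffAt hx ht
  have hs : IsSymmSndFDerivAt ℝ φ (x, t) := hc.isSymmSndFDerivAt (by simp only [minSmoothness_of_isRCLikeNormedField]; exact WithTop.coe_le_coe.2 (le_top : (2:ℕ∞) ≤ ⊤))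
  have hd : DifferentiableAt ℝ (fderiv ℝ φ) (x, t) :=
    (hc.fderiv_right (m := 1) (by exact WithTop.coe_le_coe.2 (le_top : (2:ℕ∞) ≤ ⊤))).differentiableAt (by simp)
  have e1 : (fun u => deriv (fun y => f y u) x) =ᶠ[𝓝 t] fun u => fderiv ℝ φ (x, u) (1, 0) := by
    filter_upwards [Ioo_mem_nhds ht.1 ht.2] with u hu
    exact (hf.hasDerivAt_x_fderiv hx hu).deriv
  have e2 : (fun y => deriv (fun u => f y u) t) =ᶠ[𝓝 x] fun y => fderiv ℝ φ (y, t) (0, 1) := by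
    filter_upwards [Ioi_mem_nhds hx] with y hy
    exact (hf.hasDerivAt_t_fderiv hy ht).deriv
  rw [e1.deriv_eq, e2.deriv_eq]
  have a1 : HasDerivAt (fun u => fderiv ℝ φ (x, u)) (fderiv ℝ (fderiv ℝ φ) (x, t) (0, 1)) t :=
    HasFDerivAt.comp_hasDerivAt t hd.hasFDerivAt
      ((hasDerivAt_const t x).prodMk (hasDerivAt_id t))
  have a2 : HasDerivAt (fun y => fderiv ℝ φ (y, t)) (fderiv ℝ (fderiv ℝ φ) (x, t) (1, 0)) x :=
    HasFDerivAt.comp_hasDerivAt x hd.hasFDerivAt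
      ((hasDerivAt_id x).prodMk (hasDerivAt_const x t))
  have b1 := (a1.clm_apply (hasDerivAt_const t ((1:ℝ), (0:ℝ)))).deriv
  have b2 := (a2.clm_apply (hasDerivAt_const x ((0:ℝ), (1:ℝ)))).deriv
  rw [b1, b2]
  simpa using hs.eq (0, 1) (1, 0)

theorem add (hf : Sm T f) (hg : Sm T g) : Sm T (fun x t => f x t + g x t) := ContDiffOn.add hf hg
theorem mul (hf : Sm T f) (hg : Sm T g) : Sm T (fun x t => f x t * g x t) := ContDiffOn.mul hf hg
theorem sub (hf : Sm T f) (hg : Sm T g) : Sm T (fun x t => f x t - g x t) := ContDiffOn.sub hf hg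
theorem const_mul (k : ℝ) (hf : Sm T f) : Sm T (fun x t => k * f x t) :=
  ContDiffOn.mul contDiffOn_const hf
theorem div (hf : Sm T f) (hg : Sm T g) (h0 : ∀ x > 0, ∀ t ∈ Ico (0:ℝ) T, 0 < g x t) :
    Sm T (fun x t => f x t / g x t) :=
  ContDiffOn.div hf hg (fun p hp => (h0 p.1 hp.1 p.2 hp.2).ne')
theorem inv (hg : Sm T g) (h0 : ∀ x > 0, ∀ t ∈ Ico (0:ℝ) T, 0 < g x t) :
    Sm T (fun x t => (g x t)⁻¹) :=
  ContDiffOn.inv hg (fun p hp => (h0 p.1 hp.1 p.2 hp.2).ne')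
theorem log (hg : Sm T g) (h0 : ∀ x > 0, ∀ t ∈ Ico (0:ℝ) T, 0 < g x t) :
    Sm T (fun x t => Real.log (g x t)) :=
  ContDiffOn.log hg (fun p hp => (h0 p.1 hp.1 p.2 hp.2).ne')

end Sm

/-- Second-order necessary condition at an interior maximum. -/
theorem second_deriv_nonpos {f f' : ℝ → ℝ} {x f'' : ℝ} (hmax : IsLocalMax f x)
    (h1 : ∀ᶠ y in 𝓝 x, HasDerivAt f (f' y) y) (h2 : HasDerivAt f' f'' x) : f'' ≤ 0 := by
  by_contra hpos
  push Not at hpos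
  have h0 : f' x = 0 := hmax.hasDerivAt_eq_zero h1.self_of_nhds
  have hd : deriv f =ᶠ[𝓝 x] f' := h1.mono fun y hy => hy.deriv
  have hmin : IsLocalMin f x := by
    apply isLocalMin_of_deriv_deriv_pos
    · rw [hd.deriv_eq, h2.deriv]; exact hpos
    · rw [hd.eq_of_nhds, h0]
    · exact h1.self_of_nhds.continuousAt
  have hconst : f =ᶠ[𝓝 x] fun _ => f x := by
    filter_upwards [hmax, hmin] with y a b using le_antisymm a b
  have hd0 : deriv f =ᶠ[𝓝 x] fun _ => 0 := by
    have := hconst.deriv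
    simpa using this
  have : f'' = 0 := by
    have h3 := (hd.symm.trans hd0).deriv_eq
    rw [h2.deriv] at h3; simpa using h3
  linarith

theorem second_deriv_nonneg {f f' : ℝ → ℝ} {x f'' : ℝ} (hmin : IsLocalMin f x)
    (h1 : ∀ᶠ y in 𝓝 x, HasDerivAt f (f' y) y) (h2 : HasDerivAt f' f'' x) : 0 ≤ f'' := by
  have := second_deriv_nonpos (f := fun y => - f y) (f' := fun y => - f' y) (f'' := -f'') hmin.neg
    (h1.mono fun y hy => hy.neg) h2.neg
  linarith

/-- One-sided first-order condition at a maximum in time. -/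
theorem deriv_nonneg_of_left_max {f : ℝ → ℝ} {a t f' : ℝ} (hat : a < t)
    (hmax : ∀ u ∈ Icc a t, f u ≤ f t) (h : HasDerivAt f f' t) : 0 ≤ f' := by
  by_contra hneg
  push Not at hneg
  have hs := (hasDerivAt_iff_tendsto_slope.1 h).mono_left
    (nhdsWithin_mono t (fun u (hu : u < t) => hu.ne))
  have h1 : ∀ᶠ u in 𝓝[<] t, slope f t u < 0 := hs (Iio_mem_nhds hneg)
  obtain ⟨u, hu1, hu2⟩ := (h1.and (Ico_mem_nhdsLT hat)).exists
  have := hmax u ⟨hu2.1, hu2.2.le⟩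
  rw [slope_def_field, div_neg_iff] at hu1
  have := hu2.2
  rcases hu1 with h | h <;> linarith [h.1, h.2]

namespace WarpedBergerFlow

variable (F : WarpedBergerFlow)

/-! ### Regularity and basic derivatives -/

theorem sm_b : Sm F.T F.b := F.smooth_b
theorem sm_c : Sm F.T F.c := F.smooth_c
theorem sm_ξ : Sm F.T F.ξ := F.smooth_ξ

theorem sm_dS {f : ℝ → ℝ → ℝ} (hf : Sm F.T f) : Sm F.T (dS F.ξ f) :=
  (F.sm_ξ.inv F.ξ_pos).mul hf.dx

theorem sm_bS : Sm F.T F.bS := F.sm_dS F.sm_b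
theorem sm_cS : Sm F.T F.cS := F.sm_dS F.sm_c
theorem sm_bSS : Sm F.T F.bSS := F.sm_dS F.sm_bS
theorem sm_cSS : Sm F.T F.cSS := F.sm_dS F.sm_cS

theorem hd {f : ℝ → ℝ → ℝ} (hf : Sm F.T f) {x t : ℝ} (hx : 0 < x) (ht : t ∈ Ico 0 F.T) :
    HasDerivAt (fun y => f y t) (F.ξ x t * dS F.ξ f x t) x := by
  have h := hf.hasDerivAt_x hx ht
  have h0 := (F.ξ_pos x hx t ht).ne'
  convert h using 1
  unfold dS
  field_simp

/-- If `f` has `x`-derivative `ξ g` then `f_s = g`. -/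
theorem dS_eq {f : ℝ → ℝ → ℝ} {g x t : ℝ} (hx : 0 < x) (ht : t ∈ Ico 0 F.T)
    (h : HasDerivAt (fun y => f y t) (F.ξ x t * g) x) : dS F.ξ f x t = g := by
  have h0 := (F.ξ_pos x hx t ht).ne'
  unfold dS
  rw [h.deriv]
  field_simp

theorem hd_b {x t : ℝ} (hx : 0 < x) (ht : t ∈ Ico 0 F.T) :
    HasDerivAt (fun y => F.b y t) (F.ξ x t * F.bS x t) x := F.hd F.sm_b hx ht
theorem hd_c {x t : ℝ} (hx : 0 < x) (ht : t ∈ Ico 0 F.T) :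
    HasDerivAt (fun y => F.c y t) (F.ξ x t * F.cS x t) x := F.hd F.sm_c hx ht
theorem hd_bS {x t : ℝ} (hx : 0 < x) (ht : t ∈ Ico 0 F.T) :
    HasDerivAt (fun y => F.bS y t) (F.ξ x t * F.bSS x t) x := F.hd F.sm_bS hx ht
theorem hd_cS {x t : ℝ} (hx : 0 < x) (ht : t ∈ Ico 0 F.T) :
    HasDerivAt (fun y => F.cS y t) (F.ξ x t * F.cSS x t) x := F.hd F.sm_cS hx ht

theorem bSS_eq {x t : ℝ} (hx : 0 < x) (ht : t ∈ Ico 0 F.T) :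
    F.bSS x t = -F.k01 x t * F.b x t := by
  have := (F.b_pos x hx t ht).ne'
  unfold k01; field_simp
theorem cSS_eq {x t : ℝ} (hx : 0 < x) (ht : t ∈ Ico 0 F.T) :
    F.cSS x t = -F.k03 x t * F.c x t := by
  have := (F.c_pos x hx t ht).ne'
  unfold k03; field_simp

theorem ht_b {x t : ℝ} (hx : 0 < x) (ht : t ∈ Ioo 0 F.T) :
    HasDerivAt (fun u => F.b x u) (-(F.k01 x t + F.k12 x t + F.k13 x t) * F.b x t) t := by
  have ht' : t ∈ Ico 0 F.T := ⟨ht.1.le, ht.2⟩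
  have h := F.sm_b.hasDerivAt_t hx ht
  rw [F.eq_b x hx t ht'] at h
  have hb := (F.b_pos x hx t ht').ne'
  have hc := (F.c_pos x hx t ht').ne'
  convert h using 1
  change _ = F.bSS x t + (F.cS x t / F.c x t + F.bS x t / F.b x t) * F.bS x t + _
  unfold k01 k12 k13
  field_simp
  ring

theorem ht_c {x t : ℝ} (hx : 0 < x) (ht : t ∈ Ioo 0 F.T) :
    HasDerivAt (fun u => F.c x u) (-(F.k03 x t + 2 * F.k13 x t) * F.c x t) t := by
  have ht' : t ∈ Ico 0 F.T := ⟨ht.1.le, ht.2⟩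
  have h := F.sm_c.hasDerivAt_t hx ht
  rw [F.eq_c x hx t ht'] at h
  have hb := (F.b_pos x hx t ht').ne'
  have hc := (F.c_pos x hx t ht').ne'
  convert h using 1
  change _ = F.cSS x t + 2 * (F.bS x t / F.b x t) * F.cS x t - _
  unfold k03 k13
  field_simp
  ring

theorem ht_ξ {x t : ℝ} (hx : 0 < x) (ht : t ∈ Ioo 0 F.T) :
    HasDerivAt (fun u => F.ξ x u) ((2 * F.k01 x t + F.k03 x t) * F.ξ x t) t := by
  have ht' : t ∈ Ico 0 F.T := ⟨ht.1.le, ht.2⟩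
  have h := F.sm_ξ.hasDerivAt_t hx ht
  rw [F.eq_ξ x hx t ht'] at h
  have hb := (F.b_pos x hx t ht').ne'
  have hc := (F.c_pos x hx t ht').ne'
  convert h using 1
  change _ = -F.ξ x t * (2 * F.bSS x t / F.b x t + F.cSS x t / F.c x t)
  unfold k03 k01
  field_simp
  ring

/-- Continuity in time of a smooth function. -/
theorem contT {f : ℝ → ℝ → ℝ} (hf : Sm F.T f) {x t₀ : ℝ} (hx : 0 < x) (ht₀ : t₀ < F.T) :
    ContinuousOn (fun u => f x u) (Icc 0 t₀) :=
  hf.continuousOn.comp (f := fun u : ℝ => (x, u)) (by fun_prop)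
    (fun u hu => ⟨hx, hu.1, hu.2.trans_lt ht₀⟩)

/-- Continuity in space of a smooth function. -/
theorem contX {f : ℝ → ℝ → ℝ} (hf : Sm F.T f) {t : ℝ} (ht : t ∈ Ico 0 F.T) :
    ContinuousOn (fun y => f y t) (Ioi 0) :=
  hf.continuousOn.comp (f := fun y : ℝ => (y, t)) (by fun_prop)
    (fun u hu => ⟨hu, ht⟩)

theorem exists_curv (hBC : F.BoundedCurvature) {t₀ : ℝ} (ht₀ : t₀ ∈ Ico 0 F.T) :
    ∃ C > 0, ∀ x > 0, ∀ t ∈ Icc (0:ℝ) t₀, |F.k12 x t| ≤ C ∧ |F.k13 x t| ≤ C ∧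
      |F.k01 x t| ≤ C ∧ |F.k03 x t| ≤ C := by
  obtain ⟨C, hC⟩ := hBC t₀ ht₀
  refine ⟨max C 1, by positivity, fun x hx t ht => ?_⟩
  have h := (hC x hx t ht).trans (le_max_left C 1)
  unfold RmNorm at h
  have := abs_nonneg (F.k12 x t)
  have := abs_nonneg (F.k13 x t)
  have := abs_nonneg (F.k01 x t)
  have := abs_nonneg (F.k03 x t)
  refine ⟨?_, ?_, ?_, ?_⟩ <;> linarith

end WarpedBergerFlow

theorem exp_growth {f g : ℝ → ℝ} {t₀ K : ℝ} (hf : ContinuousOn f (Icc 0 t₀))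
    (hpos : ∀ t ∈ Icc 0 t₀, 0 < f t) (hd : ∀ t ∈ Ioo 0 t₀, HasDerivAt f (g t * f t) t)
    (hg : ∀ t ∈ Ioo 0 t₀, |g t| ≤ K) {t₁ t₂ : ℝ} (h1 : t₁ ∈ Icc 0 t₀) (h2 : t₂ ∈ Icc 0 t₀)
    (h12 : t₁ ≤ t₂) :
    f t₂ ≤ Real.exp (K * (t₂ - t₁)) * f t₁ ∧ f t₁ ≤ Real.exp (K * (t₂ - t₁)) * f t₂ := by
  have hdl : ∀ t ∈ Ioo 0 t₀, HasDerivAt (fun u => Real.log (f u)) (g t) t := by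
    intro t ht
    have hp := hpos t ⟨ht.1.le, ht.2.le⟩
    have := (hd t ht).log hp.ne'
    convert this using 1
    field_simp
  have hcl : ContinuousOn (fun u => Real.log (f u)) (Icc 0 t₀) :=
    hf.log (fun t ht => (hpos t ht).ne')
  have m1 : MonotoneOn (fun u => K * u - Real.log (f u)) (Icc 0 t₀) := by
    have hh : ∀ t ∈ Ioo 0 t₀, HasDerivAt (fun u => K * u - Real.log (f u)) (K * 1 - g t) t :=
      fun t ht => ((hasDerivAt_id t).const_mul K).sub (hdl t ht)
    apply monotoneOn_of_deriv_nonneg (convex_Icc 0 t₀)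
    · exact (by fun_prop : ContinuousOn (fun u : ℝ => K * u) (Icc 0 t₀)).sub hcl
    · rw [interior_Icc]; exact fun t ht => (hh t ht).differentiableAt.differentiableWithinAt
    · rw [interior_Icc]; intro t ht; rw [(hh t ht).deriv]; linarith [(abs_le.1 (hg t ht)).2]
  have m2 : MonotoneOn (fun u => K * u + Real.log (f u)) (Icc 0 t₀) := by
    have hh : ∀ t ∈ Ioo 0 t₀, HasDerivAt (fun u => K * u + Real.log (f u)) (K * 1 + g t) t :=
      fun t ht => ((hasDerivAt_id t).const_mul K).add (hdl t ht)
    apply monotoneOn_of_deriv_nonneg (convex_Icc 0 t₀)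
    · exact (by fun_prop : ContinuousOn (fun u : ℝ => K * u) (Icc 0 t₀)).add hcl
    · rw [interior_Icc]; exact fun t ht => (hh t ht).differentiableAt.differentiableWithinAt
    · rw [interior_Icc]; intro t ht; rw [(hh t ht).deriv]; linarith [(abs_le.1 (hg t ht)).1]
  have a1 := m1 h1 h2 h12
  have a2 := m2 h1 h2 h12
  simp only at a1 a2
  have p1 := hpos _ h1
  have p2 := hpos _ h2
  constructor
  · rw [← Real.log_le_log_iff p2 (by positivity), Real.log_mul (by positivity) p1.ne', Real.log_exp]
    linarith
  · rw [← Real.log_le_log_iff p1 (by positivity), Real.log_mul (by positivity) p2.ne', Real.log_exp]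
    linarith

/-- A function on `(0,r)` with nonnegative derivative lies above its limit at `0`. -/
theorem le_of_lim {f f' : ℝ → ℝ} {r l : ℝ} (hd : ∀ x ∈ Ioo 0 r, HasDerivAt f (f' x) x)
    (hf' : ∀ x ∈ Ioo 0 r, 0 ≤ f' x) (hl : Tendsto f (𝓝[>] 0) (𝓝 l)) :
    ∀ x ∈ Ioo 0 r, l ≤ f x := by
  have m : MonotoneOn f (Ioo 0 r) := by
    apply monotoneOn_of_deriv_nonneg (convex_Ioo 0 r)
    · exact fun x hx => (hd x hx).continuousAt.continuousWithinAt
    · rw [interior_Ioo]; exact fun t ht => (hd t ht).differentiableAt.differentiableWithinAt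
    · rw [interior_Ioo]; intro t ht; rw [(hd t ht).deriv]; exact hf' t ht
  intro x hx
  refine le_of_tendsto hl ?_
  filter_upwards [Ioo_mem_nhdsGT hx.1] with y hy
  exact m ⟨hy.1, hy.2.trans hx.2⟩ hx hy.2.le

namespace WarpedBergerFlow

variable (F : WarpedBergerFlow)

/-- Uniform comparison of the metric coefficients at different times. -/
theorem time_compare (hBC : F.BoundedCurvature) {t₀ : ℝ} (ht₀ : t₀ ∈ Ico 0 F.T) :
    ∃ K > 0, ∀ x > 0, ∀ t₁ ∈ Icc 0 t₀, ∀ t₂ ∈ Icc 0 t₀, t₁ ≤ t₂ →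
      (F.b x t₂ ≤ Real.exp (K * (t₂ - t₁)) * F.b x t₁ ∧
        F.b x t₁ ≤ Real.exp (K * (t₂ - t₁)) * F.b x t₂) ∧
      (F.c x t₂ ≤ Real.exp (K * (t₂ - t₁)) * F.c x t₁ ∧
        F.c x t₁ ≤ Real.exp (K * (t₂ - t₁)) * F.c x t₂) ∧
      (F.ξ x t₂ ≤ Real.exp (K * (t₂ - t₁)) * F.ξ x t₁ ∧
        F.ξ x t₁ ≤ Real.exp (K * (t₂ - t₁)) * F.ξ x t₂) := by
  obtain ⟨C, hC, hk⟩ := F.exists_curv hBC ht₀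
  refine ⟨3 * C, by positivity, fun x hx t₁ h1 t₂ h2 h12 => ⟨?_, ?_, ?_⟩⟩
  · refine exp_growth (F.contT F.sm_b hx ht₀.2)
      (fun t ht => F.b_pos x hx t ⟨ht.1, ht.2.trans_lt ht₀.2⟩)
      (fun t ht => F.ht_b hx ⟨ht.1, ht.2.trans ht₀.2⟩) (fun t ht => ?_) h1 h2 h12
    obtain ⟨a, b, c, d⟩ := hk x hx t ⟨ht.1.le, ht.2.le⟩
    simp only [abs_le] at *
    constructor <;> linarith
  · refine exp_growth (F.contT F.sm_c hx ht₀.2)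
      (fun t ht => F.c_pos x hx t ⟨ht.1, ht.2.trans_lt ht₀.2⟩)
      (fun t ht => F.ht_c hx ⟨ht.1, ht.2.trans ht₀.2⟩) (fun t ht => ?_) h1 h2 h12
    obtain ⟨a, b, c, d⟩ := hk x hx t ⟨ht.1.le, ht.2.le⟩
    simp only [abs_le] at *
    constructor <;> linarith
  · refine exp_growth (F.contT F.sm_ξ hx ht₀.2)
      (fun t ht => F.ξ_pos x hx t ⟨ht.1, ht.2.trans_lt ht₀.2⟩)
      (fun t ht => F.ht_ξ hx ⟨ht.1, ht.2.trans ht₀.2⟩) (fun t ht => ?_) h1 h2 h12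
    obtain ⟨a, b, c, d⟩ := hk x hx t ⟨ht.1.le, ht.2.le⟩
    simp only [abs_le] at *
    constructor <;> linarith

theorem bS_near (hBC : F.BoundedCurvature)
    (hbs : ∀ x > 0, ∀ t ∈ Set.Ico (0:ℝ) F.T, 0 ≤ F.bS x t) {t₀ : ℝ} (ht₀ : t₀ ∈ Ico 0 F.T) :
    ∃ C > 0, ∀ x > 0, ∀ t ∈ Icc 0 t₀, |F.bS x t - 1| ≤ C * F.b x t ^ 2 := by
  obtain ⟨C, hC, hk⟩ := F.exists_curv hBC ht₀
  refine ⟨C, hC, fun x hx t ht => ?_⟩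
  have ht' : t ∈ Ico 0 F.T := ⟨ht.1, ht.2.trans_lt ht₀.2⟩
  have hb0 := F.b_origin t ht'
  have hs0 : Tendsto (fun x => F.bS x t) (𝓝[>] 0) (𝓝 1) := F.bs_origin t ht'
  have key : ∀ y > 0, |F.bS y t * (F.ξ y t * F.bSS y t)| ≤ C * F.b y t * (F.ξ y t * F.bS y t) := by
    intro y hy
    have h1 := (hk y hy t ht).2.2.1
    have h2 := F.b_pos y hy t ht'
    have h3 := F.ξ_pos y hy t ht'
    have h4 := hbs y hy t ht'
    rw [F.bSS_eq hy ht', abs_mul, abs_mul, abs_mul, abs_neg, abs_of_nonneg h4, abs_of_pos h3,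
      abs_of_pos h2]
    have := mul_le_mul_of_nonneg_right h1 (by positivity : 0 ≤ F.bS y t * F.ξ y t * F.b y t)
    linarith
  have l1 := le_of_lim (f := fun y => F.bS y t ^ 2 + C * F.b y t ^ 2) (r := x + 1) (l := 1)
    (f' := fun y => 2 * F.bS y t ^ 1 * (F.ξ y t * F.bSS y t)
      + C * (2 * F.b y t ^ 1 * (F.ξ y t * F.bS y t)))
    (fun y hy => ((F.hd_bS hy.1 ht').pow 2).add (((F.hd_b hy.1 ht').pow 2).const_mul C))
    (fun y hy => by have := (abs_le.1 (key y hy.1)).1; simp only [pow_one]; linarith)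
    (by simpa using (hs0.pow 2).add ((hb0.pow 2).const_mul C)) x ⟨hx, by linarith⟩
  have l2 := le_of_lim (f := fun y => C * F.b y t ^ 2 - F.bS y t ^ 2) (r := x + 1) (l := -1)
    (f' := fun y => C * (2 * F.b y t ^ 1 * (F.ξ y t * F.bS y t))
      - 2 * F.bS y t ^ 1 * (F.ξ y t * F.bSS y t))
    (fun y hy => (((F.hd_b hy.1 ht').pow 2).const_mul C).sub ((F.hd_bS hy.1 ht').pow 2))
    (fun y hy => by have := (abs_le.1 (key y hy.1)).2; simp only [pow_one]; linarith)
    (by simpa using ((hb0.pow 2).const_mul C).sub (hs0.pow 2)) x ⟨hx, by linarith⟩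
  have h4 := hbs x hx t ht'
  have h5 : 0 ≤ C * F.b x t ^ 2 := by positivity
  rw [abs_le]
  constructor
  · by_contra hh
    push Not at hh
    nlinarith
  · by_contra hh
    push Not at hh
    nlinarith

/-- Uniform asymptotics at the origin on compact time intervals. -/
theorem near_origin (hBC : F.BoundedCurvature)
    (hbs : ∀ x > 0, ∀ t ∈ Set.Ico (0:ℝ) F.T, 0 ≤ F.bS x t) {t₀ : ℝ} (ht₀ : t₀ ∈ Ico 0 F.T)
    {η : ℝ} (hη : 0 < η) :
    ∃ r > 0, ∀ x ∈ Ioo 0 r, ∀ t ∈ Icc 0 t₀, |F.bS x t - 1| ≤ η ∧ |F.cS x t - 1| ≤ η := by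
  obtain ⟨C₁, hC₁, hk⟩ := F.exists_curv hBC ht₀
  obtain ⟨C₂, hC₂, hB⟩ := F.bS_near hBC hbs ht₀
  obtain ⟨K, hK, hcmp⟩ := F.time_compare hBC ht₀
  set E := Real.exp (K * t₀) with hE
  have hE0 : 0 < E := Real.exp_pos _
  set D := C₂ + C₁ * E ^ 2 with hD
  have hD0 : 0 < D := by positivity
  set m := min (1/2) η with hm
  have hm0 : 0 < m := by positivity
  set β := min 1 (m / D) with hβ
  have hβ0 : 0 < β := by positivity
  have hβ1 : D * β ^ 2 ≤ m := by
    have a : β ≤ 1 := min_le_left _ _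
    have b : β ≤ m / D := min_le_right _ _
    rw [le_div_iff₀ hD0] at b
    nlinarith [mul_pos hD0 hβ0]
  have h0 : (0:ℝ) ∈ Ico 0 F.T := ⟨le_rfl, F.T_pos⟩
  have hev := (F.b_origin 0 h0).eventually (gt_mem_nhds (show 0 < β / E by positivity))
  obtain ⟨r, hr, hr2⟩ := mem_nhdsGT_iff_exists_Ioo_subset.1 hev
  have hr0 : (0:ℝ) < r := hr
  have hexp : ∀ t ∈ Icc 0 t₀, Real.exp (K * (t - 0)) ≤ E := by
    intro t ht
    apply Real.exp_le_exp.2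
    have := ht.2
    nlinarith
  have hbsm : ∀ x ∈ Ioo 0 r, ∀ t ∈ Icc 0 t₀, F.b x t ≤ β := by
    intro x hx t ht
    have h1 := (hcmp x hx.1 0 ⟨le_rfl, ht₀.1⟩ t ht ht.1).1.1
    have h2 : F.b x 0 < β / E := hr2 hx
    have h3 := F.b_pos x hx.1 0 h0
    rw [lt_div_iff₀ hE0] at h2
    nlinarith [hexp t ht]
  have hD2 : ∀ x ∈ Ioo 0 r, ∀ t ∈ Icc 0 t₀, D * F.b x t ^ 2 ≤ m := by
    intro x hx t ht
    have h1 := hbsm x hx t ht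
    have h2 := F.b_pos x hx.1 t ⟨ht.1, ht.2.trans_lt ht₀.2⟩
    have : F.b x t ^ 2 ≤ β ^ 2 := by gcongr
    nlinarith
  have hBm : ∀ x ∈ Ioo 0 r, ∀ t ∈ Icc 0 t₀, |F.bS x t - 1| ≤ m := by
    intro x hx t ht
    have h1 := hB x hx.1 t ht
    have h2 := hD2 x hx t ht
    have : 0 ≤ C₁ * E ^ 2 * F.b x t ^ 2 := by positivity
    rw [hD] at h2
    linarith
  refine ⟨r, hr0, fun x hx t ht => ⟨(hBm x hx t ht).trans (min_le_right _ _), ?_⟩⟩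
  have ht' : t ∈ Ico 0 F.T := ⟨ht.1, ht.2.trans_lt ht₀.2⟩
  set M := C₁ * E ^ 2 with hM
  have hM0 : 0 < M := by positivity
  have hcb : ∀ y > 0, F.c y t ≤ E ^ 2 * F.b y t := by
    intro y hy
    have h1 := (hcmp y hy 0 ⟨le_rfl, ht₀.1⟩ t ht ht.1).1.2
    have h2 := (hcmp y hy 0 ⟨le_rfl, ht₀.1⟩ t ht ht.1).2.1.1
    have h3 := F.ordered_init y hy
    have h4 := hexp t ht
    have b0 := F.b_pos y hy 0 h0
    have c0 := F.c_pos y hy 0 h0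
    have bt := F.b_pos y hy t ht'
    calc F.c y t ≤ E * F.c y 0 := h2.trans (by gcongr)
      _ ≤ E * F.b y 0 := by gcongr
      _ ≤ E * (E * F.b y t) := by
        gcongr
        exact h1.trans (by gcongr)
      _ = _ := by ring
  have key : ∀ y ∈ Ioo 0 r, |F.ξ y t * F.cSS y t| ≤ M * (2 * F.b y t ^ 1 * (F.ξ y t * F.bS y t)) := by
    intro y hy
    have h1 := (hk y hy.1 t ht).2.2.2
    have h2 := F.b_pos y hy.1 t ht'
    have h2c := F.c_pos y hy.1 t ht'
    have h3 := F.ξ_pos y hy.1 t ht'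
    have h4 : 1 ≤ 2 * F.bS y t := by
      have := (abs_le.1 (hBm y hy t ht)).1
      have : m ≤ 1/2 := min_le_left _ _
      linarith
    rw [F.cSS_eq hy.1 ht', abs_mul, abs_mul, abs_neg, abs_of_pos h3, abs_of_pos h2c]
    calc F.ξ y t * (|F.k03 y t| * F.c y t) ≤ F.ξ y t * (C₁ * (E ^ 2 * F.b y t)) := by
          gcongr
          exact hcb y hy.1
      _ = (M * F.b y t * F.ξ y t) * 1 := by rw [hM]; ring
      _ ≤ (M * F.b y t * F.ξ y t) * (2 * F.bS y t) := by gcongr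
      _ = _ := by ring
  have hb0 := F.b_origin t ht'
  have hs0 : Tendsto (fun x => F.cS x t) (𝓝[>] 0) (𝓝 1) := F.cs_origin t ht'
  have l1 := le_of_lim (f := fun y => F.cS y t + M * F.b y t ^ 2) (r := r) (l := 1)
    (f' := fun y => F.ξ y t * F.cSS y t + M * (2 * F.b y t ^ 1 * (F.ξ y t * F.bS y t)))
    (fun y hy => (F.hd_cS hy.1 ht').add (((F.hd_b hy.1 ht').pow 2).const_mul M))
    (fun y hy => by have := (abs_le.1 (key y hy)).1; linarith)
    (by simpa using hs0.add ((hb0.pow 2).const_mul M)) x hx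
  have l2 := le_of_lim (f := fun y => M * F.b y t ^ 2 - F.cS y t) (r := r) (l := -1)
    (f' := fun y => M * (2 * F.b y t ^ 1 * (F.ξ y t * F.bS y t)) - F.ξ y t * F.cSS y t)
    (fun y hy => (((F.hd_b hy.1 ht').pow 2).const_mul M).sub (F.hd_cS hy.1 ht'))
    (fun y hy => by have := (abs_le.1 (key y hy)).2; linarith)
    (by simpa using ((hb0.pow 2).const_mul M).sub hs0) x hx
  have h5 := hD2 x hx t ht
  have h6 : 0 ≤ C₂ * F.b x t ^ 2 := by positivity
  have h7 : m ≤ η := min_le_right _ _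
  rw [hD] at h5
  rw [abs_le]
  constructor <;> linarith

/-- Near the origin `c ≤ (1+η) b`. -/
theorem near_ratio (hBC : F.BoundedCurvature)
    (hbs : ∀ x > 0, ∀ t ∈ Set.Ico (0:ℝ) F.T, 0 ≤ F.bS x t) {t₀ : ℝ} (ht₀ : t₀ ∈ Ico 0 F.T)
    {η : ℝ} (hη : 0 < η) (hη1 : η ≤ 1) :
    ∃ r > 0, ∀ x ∈ Ioo 0 r, ∀ t ∈ Icc 0 t₀, F.c x t ≤ (1 + η) * F.b x t := by
  obtain ⟨r, hr, h⟩ := F.near_origin hBC hbs ht₀ (show 0 < η / 4 by positivity)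
  refine ⟨r, hr, fun x hx t ht => ?_⟩
  have ht' : t ∈ Ico 0 F.T := ⟨ht.1, ht.2.trans_lt ht₀.2⟩
  have l1 := le_of_lim (f := fun y => (1 + η) * F.b y t - F.c y t) (r := r) (l := 0)
    (f' := fun y => (1 + η) * (F.ξ y t * F.bS y t) - F.ξ y t * F.cS y t)
    (fun y hy => ((F.hd_b hy.1 ht').const_mul _).sub (F.hd_c hy.1 ht'))
    (fun y hy => by
      obtain ⟨a, b⟩ := h y hy t ht
      have a := (abs_le.1 a).1
      have b := (abs_le.1 b).2
      have hξ := F.ξ_pos y hy.1 t ht'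
      have : 0 ≤ (1 + η) * F.bS y t - F.cS y t := by nlinarith
      have := mul_nonneg hξ.le this
      linarith)
    (by simpa using ((F.b_origin t ht').const_mul (1 + η)).sub (F.c_origin t ht')) x hx
  linarith

end WarpedBergerFlow

namespace WarpedBergerFlow

variable (F : WarpedBergerFlow)

theorem barrier (hBC : F.BoundedCurvature) {t₀ : ℝ} (ht₀ : t₀ ∈ Ico 0 F.T) {a : ℝ} (ha : 0 < a) :
    ∃ σ : ℝ → ℝ → ℝ, ∃ K > 0, Continuous (fun p : ℝ × ℝ => σ p.1 p.2) ∧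
      (∀ t ∈ Icc 0 t₀, ∀ x > a, HasDerivAt (fun y => σ y t) (F.ξ x t) x) ∧
      (∀ x ≥ a, ∀ t ∈ Icc 0 t₀, 0 ≤ σ x t) ∧
      (∀ x ≥ a, ∀ t₁ ∈ Icc 0 t₀, ∀ t₂ ∈ Icc 0 t₀, t₁ ≤ t₂ →
        σ x t₁ ≤ Real.exp (K * (t₂ - t₁)) * σ x t₂) ∧
      (∀ R : ℝ, ∃ X > a, ∀ x ≥ X, ∀ t ∈ Icc 0 t₀, R ≤ σ x t) := by
  obtain ⟨K, hK, hcmp⟩ := F.time_compare hBC ht₀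
  set Ξ : ℝ → ℝ → ℝ := fun t y => F.ξ (max y a) (max 0 (min t t₀)) with hΞ
  have hcont : Continuous (fun p : ℝ × ℝ => Ξ p.1 p.2) := by
    refine F.sm_ξ.continuousOn.comp_continuous
      (f := fun p : ℝ × ℝ => (max p.2 a, max 0 (min p.1 t₀))) (by fun_prop) ?_
    intro p
    refine ⟨lt_of_lt_of_le ha (le_max_right _ _), le_max_left _ _, max_lt F.T_pos ?_⟩
    exact (min_le_right _ _).trans_lt ht₀.2
  have hΞe : ∀ t ∈ Icc 0 t₀, ∀ y ≥ a, Ξ t y = F.ξ y t := by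
    intro t ht y hy
    simp only [hΞ]
    rw [max_eq_left hy, min_eq_left ht.2, max_eq_right ht.1]
  have hct : ∀ t, Continuous (Ξ t) := fun t => hcont.comp (by fun_prop : Continuous fun y : ℝ => (t, y))
  set σ : ℝ → ℝ → ℝ := fun x t => ∫ y in a..x, Ξ t y with hσ
  have hmono : ∀ x ≥ a, ∀ t₁ ∈ Icc 0 t₀, ∀ t₂ ∈ Icc 0 t₀, t₁ ≤ t₂ →
        σ x t₁ ≤ Real.exp (K * (t₂ - t₁)) * σ x t₂ := by
    intro x hx t₁ h1 t₂ h2 h12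
    simp only [hσ]
    rw [← intervalIntegral.integral_const_mul]
    apply intervalIntegral.integral_mono_on hx
    · exact (hct t₁).intervalIntegrable _ _
    · exact ((hct t₂).const_mul _).intervalIntegrable _ _
    · intro y hy
      rw [hΞe t₁ h1 y hy.1, hΞe t₂ h2 y hy.1]
      exact (hcmp y (ha.trans_le hy.1) t₁ h1 t₂ h2 h12).2.2.2
  refine ⟨σ, K, hK, ?_, ?_, ?_, hmono, ?_⟩
  · exact intervalIntegral.continuous_parametric_intervalIntegral_of_continuous
      (f := fun (p : ℝ × ℝ) y => Ξ p.2 y) (s := fun p : ℝ × ℝ => p.1)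
      (hcont.comp (by fun_prop : Continuous fun q : (ℝ × ℝ) × ℝ => (q.1.2, q.2))) (by fun_prop)
  · intro t ht x hx
    rw [← hΞe t ht x hx.le]
    exact (hct t).integral_hasStrictDerivAt a x |>.hasDerivAt
  · intro x hx t ht
    apply intervalIntegral.integral_nonneg hx
    intro y hy
    rw [hΞe t ht y hy.1]
    exact (F.ξ_pos y (ha.trans_le hy.1) t ⟨ht.1, ht.2.trans_lt ht₀.2⟩).le
  · intro R
    have h0 : (0:ℝ) ∈ Ico 0 F.T := ⟨le_rfl, F.T_pos⟩
    have h0' : (0:ℝ) ∈ Icc 0 t₀ := ⟨le_rfl, ht₀.1⟩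
    have hc := F.complete 0 h0
    set R' := Real.exp (K * t₀) * max R 0 + |∫ y in (0:ℝ)..a, F.ξ y 0| + 1
    have hev := (hc.eventually_ge_atTop R').and (eventually_gt_atTop a)
    obtain ⟨X, hX⟩ := eventually_atTop.1 hev
    refine ⟨max X (a + 1), lt_of_lt_of_le (by linarith) (le_max_right _ _), fun x hx t ht => ?_⟩
    obtain ⟨h1, h2⟩ := hX x ((le_max_left _ _).trans hx)
    have hRp : 0 < R' := by positivity
    have hint : IntervalIntegrable (fun y => F.ξ y 0) volume 0 x := by
      by_contra hh
      rw [intervalIntegral.integral_undef hh] at h1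
      linarith
    have hi1 : IntervalIntegrable (fun y => F.ξ y 0) volume 0 a :=
      hint.mono_set (by rw [uIcc_of_le ha.le, uIcc_of_le (ha.trans h2).le]; exact Icc_subset_Icc_right h2.le)
    have hi2 : IntervalIntegrable (fun y => F.ξ y 0) volume a x :=
      hint.mono_set (by rw [uIcc_of_le h2.le, uIcc_of_le (ha.trans h2).le]; exact Icc_subset_Icc_left ha.le)
    have hadd := intervalIntegral.integral_add_adjacent_intervals hi1 hi2
    have he : σ x 0 = ∫ y in a..x, F.ξ y 0 := by
      apply intervalIntegral.integral_congr
      intro y hy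
      rw [uIcc_of_le h2.le] at hy
      exact hΞe 0 h0' y hy.1
    have h3 : Real.exp (K * t₀) * max R 0 ≤ σ x 0 := by
      rw [he]
      have := le_abs_self (∫ y in (0:ℝ)..a, F.ξ y 0)
      simp only [R'] at h1
      linarith
    have h4 := hmono x h2.le 0 h0' t ht ht.1
    have hnn : 0 ≤ σ x t := by
      apply intervalIntegral.integral_nonneg h2.le
      intro y hy
      rw [hΞe t ht y hy.1]
      exact (F.ξ_pos y (ha.trans_le hy.1) t ⟨ht.1, ht.2.trans_lt ht₀.2⟩).le
    have h5 : Real.exp (K * (t - 0)) ≤ Real.exp (K * t₀) := by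
      apply Real.exp_le_exp.2
      have := ht.2
      nlinarith
    have h6 : Real.exp (K * t₀) * max R 0 ≤ Real.exp (K * t₀) * σ x t := by
      calc _ ≤ _ := h3
        _ ≤ _ := h4
        _ ≤ _ := by gcongr
    exact (le_max_left R 0).trans (le_of_mul_le_mul_left h6 (Real.exp_pos _))

/-- The mean curvature is bounded above away from the origin on compact time intervals. -/
theorem meanH_bdd (hBC : F.BoundedCurvature)
    (hbs : ∀ x > 0, ∀ t ∈ Set.Ico (0:ℝ) F.T, 0 ≤ F.bS x t)
    {t₀ : ℝ} (ht₀ : t₀ ∈ Ico 0 F.T) {a : ℝ} (ha : 0 < a) :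
    ∃ P > 0, ∀ x ≥ a, ∀ t ∈ Icc 0 t₀, F.meanH x t ≤ P := by
  obtain ⟨C, hC, hk⟩ := F.exists_curv hBC ht₀
  have hIco : ∀ t ∈ Icc 0 t₀, t ∈ Ico 0 F.T := fun t ht => ⟨ht.1, ht.2.trans_lt ht₀.2⟩
  -- lower bound for `b`
  obtain ⟨tm, htm, hmin⟩ := isCompact_Icc.exists_isMinOn (nonempty_Icc.2 ht₀.1)
    (F.contT F.sm_b ha ht₀.2)
  set β := F.b a tm with hβ
  have hβ0 : 0 < β := F.b_pos a ha tm (hIco tm htm)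
  have hbmono : ∀ x ≥ a, ∀ t ∈ Icc 0 t₀, β ≤ F.b x t := by
    intro x hx t ht
    have m : MonotoneOn (fun y => F.b y t) (Ioi 0) := by
      apply monotoneOn_of_deriv_nonneg (convex_Ioi 0) (F.contX F.sm_b (hIco t ht))
      · rw [interior_Ioi]
        exact fun y hy => (F.hd_b hy (hIco t ht)).differentiableAt.differentiableWithinAt
      · rw [interior_Ioi]
        intro y hy
        rw [(F.hd_b hy (hIco t ht)).deriv]
        exact mul_nonneg (F.ξ_pos y hy t (hIco t ht)).le (hbs y hy t (hIco t ht))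
    exact (hmin ht).trans (m ha (ha.trans_le hx) hx)
  -- upper bound for `q` at `a`
  have smq : Sm F.T (fun x t => F.cS x t / F.c x t) := F.sm_cS.div F.sm_c F.c_pos
  obtain ⟨tM, htM, hmax⟩ := isCompact_Icc.exists_isMaxOn (nonempty_Icc.2 ht₀.1)
    (F.contT smq ha ht₀.2)
  set M := max (F.cS a tM / F.c a tM) (C + 1) with hM
  have hM1 : C + 1 ≤ M := le_max_right _ _
  have hq : ∀ x ≥ a, ∀ t ∈ Icc 0 t₀, F.cS x t / F.c x t ≤ M := by
    intro x hx t ht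
    have ht' := hIco t ht
    have hdq : ∀ y > 0, HasDerivAt (fun y => F.cS y t / F.c y t)
        ((F.ξ y t * F.cSS y t * F.c y t - F.cS y t * (F.ξ y t * F.cS y t)) / F.c y t ^ 2) y :=
      fun y hy => (F.hd_cS hy ht').div (F.hd_c hy ht') (F.c_pos y hy t ht').ne'
    refine image_le_of_deriv_right_lt_deriv_boundary (a := a) (b := x)
      (f := fun y => F.cS y t / F.c y t) (B := fun _ => M) (B' := fun _ => 0)
      (f' := fun y => (F.ξ y t * F.cSS y t * F.c y t - F.cS y t * (F.ξ y t * F.cS y t)) / F.c y t ^ 2)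
      (fun y hy => (hdq y (ha.trans_le hy.1)).continuousAt.continuousWithinAt)
      (fun y hy => (hdq y (ha.trans_le hy.1)).hasDerivWithinAt)
      ((hmax ht).trans (le_max_left _ _)) (fun y => hasDerivAt_const y M) ?_ ⟨hx, le_rfl⟩
    intro y hy hyM
    have hy0 := ha.trans_le hy.1
    have hc := F.c_pos y hy0 t ht'
    have hξ := F.ξ_pos y hy0 t ht'
    have hcS : F.cS y t = M * F.c y t := by
      rw [← hyM]; field_simp
    rw [F.cSS_eq hy0 ht', hcS]
    have h03 := (abs_le.1 (hk y hy0 t ht).2.2.2).1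
    have : (F.ξ y t * (-F.k03 y t * F.c y t) * F.c y t
        - M * F.c y t * (F.ξ y t * (M * F.c y t))) / F.c y t ^ 2
        = F.ξ y t * (-F.k03 y t - M ^ 2) := by field_simp
    rw [this]
    apply mul_neg_of_pos_of_neg hξ
    nlinarith
  refine ⟨2 * (4 / β ^ 2 + C + 1) + M, by positivity, fun x hx t ht => ?_⟩
  have hx0 := ha.trans_le hx
  have ht' := hIco t ht
  have hb := hbmono x hx t ht
  have hb0 := F.b_pos x hx0 t ht'
  have h12 := (abs_le.1 (hk x hx0 t ht).1).1
  have hp : (F.bS x t / F.b x t) ^ 2 ≤ 4 / β ^ 2 + C := by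
    have e : (F.bS x t / F.b x t) ^ 2 = 4 / F.b x t ^ 2 - 3 * F.c x t ^ 2 / F.b x t ^ 4 - F.k12 x t := by
      unfold k12; field_simp; ring
    have : 4 / F.b x t ^ 2 ≤ 4 / β ^ 2 := by gcongr
    have : 0 ≤ 3 * F.c x t ^ 2 / F.b x t ^ 4 := by positivity
    linarith
  have hp2 : F.bS x t / F.b x t ≤ 4 / β ^ 2 + C + 1 := by
    have : 0 < 4 / β ^ 2 := by positivity
    nlinarith [sq_nonneg (F.bS x t / F.b x t - 1)]
  have := hq x hx t ht
  unfold meanH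
  rw [mul_div_assoc]
  linarith

/-- The Berger ordering is preserved. -/
theorem ordered_aux (hBC : F.BoundedCurvature)
    (hbs : ∀ x > 0, ∀ t ∈ Set.Ico (0:ℝ) F.T, 0 ≤ F.bS x t)
    {t₀ : ℝ} (ht₀ : t₀ ∈ Ico 0 F.T) {a η : ℝ} (ha : 0 < a) (hη : 0 < η)
    (hlat : ∀ t ∈ Icc 0 t₀, Real.log (F.c a t) - Real.log (F.b a t) ≤ η) :
    ∀ x ≥ a, ∀ t ∈ Icc 0 t₀, Real.log (F.c x t) - Real.log (F.b x t) ≤ η := by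
  obtain ⟨K, hK, hcmp⟩ := F.time_compare hBC ht₀
  obtain ⟨σ, L, hL, hσc, hσd, hσ0, hσt, hσX⟩ := F.barrier hBC ht₀ ha
  obtain ⟨P, hP, hPH⟩ := F.meanH_bdd hBC hbs ht₀ ha
  have hIco : ∀ t ∈ Icc 0 t₀, t ∈ Ico 0 F.T := fun t ht => ⟨ht.1, ht.2.trans_lt ht₀.2⟩
  set w : ℝ → ℝ → ℝ := fun x t => Real.log (F.c x t) - Real.log (F.b x t) with hw
  have smw : Sm F.T w := (F.sm_c.log F.c_pos).sub (F.sm_b.log F.b_pos)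
  have h00 : (0:ℝ) ∈ Icc 0 t₀ := ⟨le_rfl, ht₀.1⟩
  have hw0 : ∀ x > 0, w x 0 ≤ 0 := by
    intro x hx
    have := Real.log_le_log (F.c_pos x hx 0 (hIco 0 h00)) (F.ordered_init x hx)
    simp only [hw]; linarith
  have hwb : ∀ x > 0, ∀ t ∈ Icc 0 t₀, w x t ≤ 2 * K * t₀ := by
    intro x hx t ht
    have h1 := (hcmp x hx 0 h00 t ht ht.1).1.2
    have h2 := (hcmp x hx 0 h00 t ht ht.1).2.1.1
    have b0 := F.b_pos x hx 0 (hIco 0 h00)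
    have c0 := F.c_pos x hx 0 (hIco 0 h00)
    have bt := F.b_pos x hx t (hIco t ht)
    have ct := F.c_pos x hx t (hIco t ht)
    have l1 := Real.log_le_log b0 h1
    have l2 := Real.log_le_log ct h2
    rw [Real.log_mul (Real.exp_pos _).ne' bt.ne', Real.log_exp] at l1
    rw [Real.log_mul (Real.exp_pos _).ne' c0.ne', Real.log_exp] at l2
    have := hw0 x hx
    simp only [hw] at this ⊢
    have := mul_le_mul_of_nonneg_left ht.2 hK.le
    linarith
  set A := L + P + 1 with hA
  have hA0 : 0 < A := by positivity
  -- comparison with the barrier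
  have main : ∀ e > 0, ∀ x ≥ a, ∀ t ∈ Icc 0 t₀,
      w x t - η - e * (Real.exp (A * t) * (1 + σ x t)) ≤ 0 := by
    intro e he
    by_contra hcon
    push Not at hcon
    obtain ⟨x₁, hx₁, t₁, ht₁, hpos⟩ := hcon
    set f : ℝ → ℝ → ℝ := fun x t => w x t - η - e * (Real.exp (A * t) * (1 + σ x t)) with hf
    obtain ⟨X, hXa, hX⟩ := hσX (2 * K * t₀ / e)
    have hfar : ∀ x ≥ X, ∀ t ∈ Icc 0 t₀, f x t < 0 := by
      intro x hx t ht
      have h1 := hX x hx t ht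
      rw [div_le_iff₀ he] at h1
      have h2 := hwb x (ha.trans_le (hXa.le.trans hx)) t ht
      have h3 : 1 ≤ Real.exp (A * t) := Real.one_le_exp (mul_nonneg hA0.le ht.1)
      have h4 := hσ0 x (hXa.le.trans hx) t ht
      have h5 : 1 * (1 + σ x t) ≤ Real.exp (A * t) * (1 + σ x t) := by gcongr
      have h6 := mul_le_mul_of_nonneg_left h5 he.le
      simp only [hf]
      nlinarith
    have hcf : ContinuousOn (fun p : ℝ × ℝ => f p.1 p.2) (Icc a X ×ˢ Icc 0 t₀) := by
      have h1 : ContinuousOn (fun p : ℝ × ℝ => w p.1 p.2) (Icc a X ×ˢ Icc 0 t₀) :=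
        smw.continuousOn.mono (prod_mono (fun y hy => ha.trans_le hy.1) (fun t ht => hIco t ht))
      have h2 : Continuous (fun p : ℝ × ℝ => η + e * (Real.exp (A * p.2) * (1 + σ p.1 p.2))) := by
        fun_prop
      refine (h1.sub h2.continuousOn).congr ?_
      intro p hp
      simp only [hf, Pi.sub_apply]; ring
    have hx₁X : x₁ < X := by
      by_contra hh
      push Not at hh
      exact absurd hpos (hfar x₁ hh t₁ ht₁).not_gt
    obtain ⟨⟨y, s⟩, ⟨hy, hs⟩, hmax⟩ := (isCompact_Icc.prod isCompact_Icc).exists_isMaxOn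
      ⟨(x₁, t₁), ⟨⟨hx₁, hx₁X.le⟩, ht₁⟩⟩ hcf
    simp only at hy hs
    have hfpos : 0 < f y s := hpos.trans_le (hmax (a := (x₁, t₁)) ⟨⟨hx₁, hx₁X.le⟩, ht₁⟩)
    have hbar : ∀ x ≥ a, ∀ t ∈ Icc 0 t₀, 0 ≤ e * (Real.exp (A * t) * (1 + σ x t)) := by
      intro x hx t ht
      have := hσ0 x hx t ht
      positivity
    have hya : a < y := by
      rcases hy.1.eq_or_lt with h | h
      · exfalso
        have h1 := hlat s hs
        have h2 := hbar y hy.1 s hs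
        rw [h] at h1
        simp only [hf, hw] at hfpos
        linarith
      · exact h
    have hyX : y < X := by
      by_contra hh
      push Not at hh
      exact absurd hfpos (hfar y hh s hs).not_gt
    have hs0 : 0 < s := by
      rcases hs.1.eq_or_lt with h | h
      · exfalso
        have h1 := hw0 y (ha.trans hya)
        have h2 := hbar y hy.1 s hs
        rw [← h] at h2 hfpos
        simp only [hf] at hfpos
        linarith
      · exact h
    have hy0 := ha.trans hya
    have hs' := hIco s hs
    have hso : s ∈ Ioo 0 F.T := ⟨hs0, hs'.2⟩
    have hb := F.b_pos y hy0 s hs'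
    have hc := F.c_pos y hy0 s hs'
    have hξ := F.ξ_pos y hy0 s hs'
    -- spatial derivatives
    set κ := e * Real.exp (A * s) with hκ
    have hκ0 : 0 < κ := by positivity
    have hloc : IsLocalMax (fun z => f z s) y := by
      filter_upwards [Ioo_mem_nhds hya hyX] with z hz
      exact hmax (a := (z, s)) ⟨⟨hz.1.le, hz.2.le⟩, hs⟩
    have hd1 : ∀ᶠ z in 𝓝 y, HasDerivAt (fun z => f z s)
        (F.ξ z s * (F.cS z s / F.c z s - F.bS z s / F.b z s - κ)) z := by
      filter_upwards [Ioi_mem_nhds hya] with z hz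
      have hz0 : 0 < z := ha.trans hz
      have d1 := (F.hd_c hz0 hs').log (F.c_pos z hz0 s hs').ne'
      have d2 := (F.hd_b hz0 hs').log (F.b_pos z hz0 s hs').ne'
      have d3 := (((hσd s hs z hz).const_add 1).const_mul (Real.exp (A * s))).const_mul e
      have d4 : HasDerivAt (fun z => f z s) _ z := ((d1.sub d2).sub_const η).sub d3
      exact d4.congr_deriv (by rw [hκ]; ring)
    have hcrit := hloc.hasDerivAt_eq_zero hd1.self_of_nhds
    have hd0 : F.cS y s / F.c y s - F.bS y s / F.b y s - κ = 0 := by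
      rcases mul_eq_zero.1 hcrit with h | h
      · exact absurd h hξ.ne'
      · exact h
    have hdq := ((F.hd_cS hy0 hs').div (F.hd_c hy0 hs') hc.ne')
    have hdp := ((F.hd_bS hy0 hs').div (F.hd_b hy0 hs') hb.ne')
    have hd2 := (F.hd F.sm_ξ hy0 hs').mul ((hdq.sub hdp).sub_const κ)
    have hsec := second_deriv_nonpos hloc hd1 hd2
    simp only [Pi.sub_apply, Pi.div_apply] at hsec
    rw [hd0, mul_zero, zero_add] at hsec
    have hds : F.cSS y s / F.c y s - (F.cS y s / F.c y s) ^ 2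
        - (F.bSS y s / F.b y s - (F.bS y s / F.b y s) ^ 2) ≤ 0 := by
      have e1 : F.ξ y s * ((F.ξ y s * F.cSS y s * F.c y s - F.cS y s * (F.ξ y s * F.cS y s)) / F.c y s ^ 2
        - (F.ξ y s * F.bSS y s * F.b y s - F.bS y s * (F.ξ y s * F.bS y s)) / F.b y s ^ 2)
        = F.ξ y s ^ 2 * (F.cSS y s / F.c y s - (F.cS y s / F.c y s) ^ 2
        - (F.bSS y s / F.b y s - (F.bS y s / F.b y s) ^ 2)) := by
        field_simp
      rw [e1] at hsec
      exact nonpos_of_mul_nonpos_right hsec (by positivity)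
    -- time derivative
    have hwt : HasDerivAt (fun u => w y u)
        (-(F.k03 y s + 2 * F.k13 y s) + (F.k01 y s + F.k12 y s + F.k13 y s)) s := by
      have d1 := (F.ht_c hy0 hso).log hc.ne'
      have d2 := (F.ht_b hy0 hso).log hb.ne'
      have d3 : HasDerivAt (fun u => w y u) _ s := d1.sub d2
      exact d3.congr_deriv (by field_simp; ring)
    have hex : HasDerivAt (fun u => e * Real.exp (A * u)) (e * (Real.exp (A * s) * (A * 1))) s :=
      ((((hasDerivAt_id s).const_mul A)).exp).const_mul e
    have hT := deriv_nonneg_of_left_max (f := fun u => w y u - e * Real.exp (A * u)) hs0 (by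
      intro u hu
      have hu' : u ∈ Icc 0 t₀ := ⟨hu.1, hu.2.trans hs.2⟩
      have h1 : f y u ≤ f y s := hmax (a := (y, u)) ⟨hy, hu'⟩
      have h2 := hσt y hy.1 u hu' s hs hu.2
      have h3 : Real.exp (A * u) * σ y u ≤ Real.exp (A * s) * σ y s := by
        have h4 := hσ0 y hy.1 s hs
        calc Real.exp (A * u) * σ y u ≤ Real.exp (A * u) * (Real.exp (L * (s - u)) * σ y s) := by
              gcongr
          _ = Real.exp (A * u + L * (s - u)) * σ y s := by rw [Real.exp_add]; ring
          _ ≤ Real.exp (A * s) * σ y s := by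
              gcongr
              have : 0 ≤ (A - L) * (s - u) := mul_nonneg (by rw [hA]; linarith) (by linarith [hu.2])
              nlinarith
      have h5 := mul_le_mul_of_nonneg_left h3 he.le
      simp only [hf] at h1
      linarith) (hwt.sub hex)
    -- contradiction
    have hHle := hPH y hy.1 s hs
    have hwpos : F.b y s ^ 2 ≤ F.c y s ^ 2 := by
      have h1 : 0 < w y s := by
        have := hbar y hy.1 s hs
        simp only [hf] at hfpos
        linarith
      have h2 : F.b y s ≤ F.c y s := by
        rw [← Real.log_le_log_iff hb hc]
        simp only [hw] at h1; linarith
      gcongr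
    have hid : -(F.k03 y s + 2 * F.k13 y s) + (F.k01 y s + F.k12 y s + F.k13 y s)
        = (F.cSS y s / F.c y s - (F.cS y s / F.c y s) ^ 2
        - (F.bSS y s / F.b y s - (F.bS y s / F.b y s) ^ 2))
        + (F.cS y s / F.c y s - F.bS y s / F.b y s) * F.meanH y s
        - 4 * (F.c y s ^ 2 - F.b y s ^ 2) / F.b y s ^ 4 := by
      unfold k03 k13 k01 k12 meanH
      field_simp
      ring
    have hneg : 0 ≤ 4 * (F.c y s ^ 2 - F.b y s ^ 2) / F.b y s ^ 4 :=
      div_nonneg (by linarith) (by positivity)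
    have hdκ : F.cS y s / F.c y s - F.bS y s / F.b y s = κ := by linarith
    rw [hid, hdκ] at hT
    have h7 : κ * F.meanH y s ≤ κ * P := by gcongr
    have h8 : e * (Real.exp (A * s) * (A * 1)) = κ * A := by rw [hκ]; ring
    rw [h8] at hT
    have h9 : κ * A = κ * L + κ * P + κ := by rw [hA]; ring
    have : 0 < κ * L := by positivity
    linarith
  intro x hx t ht
  by_contra hcon
  push Not at hcon
  set Q := Real.exp (A * t) * (1 + σ x t) with hQ
  have hQ0 : 0 < Q := by
    have := hσ0 x hx t ht
    positivity
  have hgap : 0 < w x t - η := by simp only [hw]; linarith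
  have := main ((w x t - η) / (2 * Q)) (by positivity) x hx t ht
  rw [← hQ] at this
  have e2 : (w x t - η) / (2 * Q) * Q = (w x t - η) / 2 := by field_simp
  rw [e2] at this
  linarith

theorem ordered (hBC : F.BoundedCurvature)
    (hbs : ∀ x > 0, ∀ t ∈ Set.Ico (0:ℝ) F.T, 0 ≤ F.bS x t)
    {x t : ℝ} (hx : 0 < x) (ht : t ∈ Ico 0 F.T) : F.c x t ≤ F.b x t := by
  rw [← Real.log_le_log_iff (F.c_pos x hx t ht) (F.b_pos x hx t ht), ← sub_nonpos]
  refine le_of_forall_pos_le_add fun η₀ hη₀ => ?_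
  set η := min η₀ 1 with hη
  have hη0 : 0 < η := by positivity
  rw [zero_add]
  refine le_trans ?_ (min_le_left η₀ 1)
  obtain ⟨r, hr, h⟩ := F.near_ratio hBC hbs ht hη0 (min_le_right _ _)
  have hlog : ∀ y ∈ Ioo 0 r, ∀ u ∈ Icc 0 t, Real.log (F.c y u) - Real.log (F.b y u) ≤ η := by
    intro y hy u hu
    have hu' : u ∈ Ico 0 F.T := ⟨hu.1, hu.2.trans_lt ht.2⟩
    have h1 := Real.log_le_log (F.c_pos y hy.1 u hu') (h y hy u hu)
    rw [Real.log_mul (by positivity) (F.b_pos y hy.1 u hu').ne'] at h1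
    have := Real.log_le_sub_one_of_pos (show 0 < 1 + η by positivity)
    linarith
  have htt : t ∈ Icc 0 t := ⟨ht.1, le_rfl⟩
  by_cases hxr : x < r
  · exact hlog x ⟨hx, hxr⟩ t htt
  · push Not at hxr
    exact F.ordered_aux hBC hbs ht (show 0 < r / 2 by positivity) hη0
      (fun u hu => hlog (r / 2) ⟨by positivity, by linarith⟩ u hu) x (by linarith) t htt

end WarpedBergerFlow

namespace WarpedBergerFlow

variable (F : WarpedBergerFlow)

/-! ### Evolution of the mean curvature -/

theorem sm_H : Sm F.T F.meanH :=
  ((F.sm_bS.const_mul 2).div F.sm_b F.b_pos).add (F.sm_cS.div F.sm_c F.c_pos)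

/-- `H_s`. -/
def HS : ℝ → ℝ → ℝ := dS F.ξ F.meanH
/-- `H_ss`. -/
def HSS : ℝ → ℝ → ℝ := dS F.ξ F.HS

theorem sm_HS : Sm F.T F.HS := F.sm_dS F.sm_H

theorem hd_H {x t : ℝ} (hx : 0 < x) (ht : t ∈ Ico 0 F.T) :
    HasDerivAt (fun y => F.meanH y t) (F.ξ x t * F.HS x t) x := F.hd F.sm_H hx ht
theorem hd_HS {x t : ℝ} (hx : 0 < x) (ht : t ∈ Ico 0 F.T) :
    HasDerivAt (fun y => F.HS y t) (F.ξ x t * F.HSS x t) x := F.hd F.sm_HS hx ht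

theorem HS_eq {x t : ℝ} (hx : 0 < x) (ht : t ∈ Ico 0 F.T) :
    F.HS x t = 2 * (F.bSS x t / F.b x t - (F.bS x t / F.b x t) ^ 2)
      + (F.cSS x t / F.c x t - (F.cS x t / F.c x t) ^ 2) := by
  have hb := (F.b_pos x hx t ht).ne'
  have hc := (F.c_pos x hx t ht).ne'
  apply F.dS_eq hx ht
  have d : HasDerivAt (fun y => F.meanH y t) _ x :=
    (((F.hd_bS hx ht).const_mul 2).div (F.hd_b hx ht) hb).add
      ((F.hd_cS hx ht).div (F.hd_c hx ht) hc)
  exact d.congr_deriv (by field_simp)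

/-- Evolution equation of `H`. -/
theorem ht_H {x t : ℝ} (hx : 0 < x) (ht : t ∈ Ioo 0 F.T) :
    HasDerivAt (fun u => F.meanH x u)
      (F.HSS x t + 2 * F.meanH x t * F.HS x t
        + (4 * F.c x t * F.cS x t / F.b x t ^ 4 - 8 * F.c x t ^ 2 * F.bS x t / F.b x t ^ 5
          + 16 * F.bS x t / F.b x t ^ 3)
        - (2 * F.k01 x t + F.k03 x t) * F.meanH x t) t := by
  have hI : ∀ u ∈ Ioo 0 F.T, u ∈ Ico 0 F.T := fun u hu => ⟨hu.1.le, hu.2⟩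
  have ht' := hI t ht
  set L : ℝ → ℝ → ℝ := fun x t => 2 * Real.log (F.b x t) + Real.log (F.c x t) with hL
  have smL : Sm F.T L := ((F.sm_b.log F.b_pos).const_mul 2).add (F.sm_c.log F.c_pos)
  have hLx : ∀ u ∈ Ioo 0 F.T, deriv (fun y => L y u) x = F.ξ x u * F.meanH x u := by
    intro u hu
    have hu' := hI u hu
    have hb := (F.b_pos x hx u hu').ne'
    have hc := (F.c_pos x hx u hu').ne'
    have d : HasDerivAt (fun y => L y u) _ x :=
      (((F.hd_b hx hu').log hb).const_mul 2).add ((F.hd_c hx hu').log hc)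
    rw [d.deriv]
    unfold meanH
    field_simp
  have hLt : ∀ y > 0, deriv (fun u => L y u) t = F.HS y t + F.meanH y t ^ 2
      + (2 * F.c y t ^ 2 / F.b y t ^ 4 - 8 / F.b y t ^ 2) := by
    intro y hy
    have hb := (F.b_pos y hy t ht').ne'
    have hc := (F.c_pos y hy t ht').ne'
    have d : HasDerivAt (fun u => L y u) _ t :=
      (((F.ht_b hy ht).log hb).const_mul 2).add ((F.ht_c hy ht).log hc)
    rw [d.deriv, F.HS_eq hy ht']
    unfold meanH k01 k12 k13 k03
    field_simp
    ring
  have hsym := smL.symm hx ht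
  have e1 : (fun u => deriv (fun y => L y u) x) =ᶠ[𝓝 t] fun u => F.ξ x u * F.meanH x u := by
    filter_upwards [Ioo_mem_nhds ht.1 ht.2] with u hu using hLx u hu
  have e2 : (fun y => deriv (fun u => L y u) t) =ᶠ[𝓝 x] fun y => F.HS y t + F.meanH y t ^ 2
      + (2 * F.c y t ^ 2 / F.b y t ^ 4 - 8 / F.b y t ^ 2) := by
    filter_upwards [Ioi_mem_nhds hx] with y hy using hLt y hy
  rw [e1.deriv_eq, e2.deriv_eq] at hsym
  have hb := (F.b_pos x hx t ht').ne'
  have hc := (F.c_pos x hx t ht').ne'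
  have hξ := (F.ξ_pos x hx t ht').ne'
  have hHt := F.sm_H.hasDerivAt_t hx ht
  have d1 : HasDerivAt (fun u => F.ξ x u * F.meanH x u) _ t := (F.ht_ξ hx ht).mul hHt
  have d2 : HasDerivAt (fun y => F.HS y t + F.meanH y t ^ 2
      + (2 * F.c y t ^ 2 / F.b y t ^ 4 - 8 / F.b y t ^ 2)) _ x :=
    ((F.hd_HS hx ht').add ((F.hd_H hx ht').pow 2)).add
      (((((F.hd_c hx ht').pow 2).const_mul 2).div ((F.hd_b hx ht').pow 4) (pow_ne_zero 4 hb)).sub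
        ((hasDerivAt_const x (8:ℝ)).div ((F.hd_b hx ht').pow 2) (pow_ne_zero 2 hb)))
  rw [d1.deriv, d2.deriv] at hsym
  refine hHt.congr_deriv ?_
  apply mul_left_cancel₀ hξ
  have h3 : F.ξ x t * deriv (fun u => F.meanH x u) t = _ := eq_sub_of_add_eq' hsym
  rw [h3]
  simp only [Pi.pow_apply, Nat.cast_ofNat]
  field_simp
  ring

end WarpedBergerFlow

/-- The zeroth-order estimate. -/
theorem zeroth_order {b c p q u α ε μ : ℝ} (hb : 0 < b) (hc : 0 < c) (hp : 0 ≤ p) (hu : 0 ≤ u)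
    (hε : 0 < ε) (hα : 0 < α)
    (hcb : ε ≤ c / b) (hcb1 : c ≤ b) (hq : |q - p| ≤ α) (hu2 : u = c * (2 * p + q)) (huμ : u ≤ μ)
    (hμ : μ ≤ ε ^ 2) :
    0 ≤ u * (2 * p ^ 2 - 4 * p * q + 2 * c ^ 2 / b ^ 4) + 16 * c * p / b ^ 2 * (1 - c ^ 2 / b ^ 2)
      + 3 * α ^ 2 * u := by
  have h1 : 0 ≤ 16 * c * p / b ^ 2 * (1 - c ^ 2 / b ^ 2) := by
    apply mul_nonneg (by positivity)
    rw [sub_nonneg, div_le_one (by positivity)]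
    gcongr
  obtain ⟨hq1, hq2⟩ := abs_le.1 hq
  set r := u / c with hr
  have hr0 : 0 ≤ r := by positivity
  have hrH : r = 2 * p + q := by rw [hr, hu2]; field_simp
  have hpr : 3 * p ≤ r + α := by linarith
  have hrb : r ^ 2 ≤ c ^ 2 / b ^ 4 := by
    have e : c ^ 2 / b ^ 4 = ((c / b) ^ 2 / c) ^ 2 := by field_simp
    rw [e]
    have h2 : r ≤ (c / b) ^ 2 / c := by
      rw [hr]
      have : u ≤ (c / b) ^ 2 := (huμ.trans hμ).trans (by gcongr)
      gcongr
    gcongr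
  have h3 : 0 ≤ 2 * p ^ 2 - 4 * p * q + 2 * c ^ 2 / b ^ 4 + 3 * α ^ 2 := by
    have e : 2 * c ^ 2 / b ^ 4 = 2 * (c ^ 2 / b ^ 4) := by ring
    rw [e]
    have h4 : 2 * p ^ 2 - 4 * p * q ≥ -2 * p ^ 2 - 4 * α * p := by nlinarith
    have h5 : 9 * p ^ 2 ≤ (r + α) ^ 2 := by nlinarith
    have h6 : 3 * (α * p) ≤ α * (r + α) := by nlinarith
    nlinarith [sq_nonneg (r - α)]
  have := mul_nonneg hu h3
  linarith

theorem cH_weak_bound (F : WarpedBergerFlow) (hBC : F.BoundedCurvature)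
    (hbs : ∀ x > 0, ∀ t ∈ Set.Ico (0:ℝ) F.T, 0 ≤ F.bS x t)
    (hH : ∀ x > 0, ∀ t ∈ Set.Ico (0:ℝ) F.T, 0 ≤ F.meanH x t)
    (x₂ : ℝ) (δ : ℝ) (t' : ℝ) (ht' : t' ∈ Set.Ico (0:ℝ) F.T)
    (ε : ℝ) (hε : 0 < ε) (α : ℝ) (hα : 0 < α)
    (hlat : ∀ t ∈ Set.Ico t' F.T, δ ≤ F.c x₂ t * F.meanH x₂ t)
    (hinit : ∀ x ∈ Set.Ioc (0:ℝ) x₂, δ ≤ F.c x t' * F.meanH x t')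
    (hcb : ∀ x ∈ Set.Ioc (0:ℝ) x₂, ∀ t ∈ Set.Ico t' F.T, ε ≤ F.c x t / F.b x t)
    (hgrad : ∀ x ∈ Set.Ioc (0:ℝ) x₂, ∀ t ∈ Set.Ico t' F.T,
      |F.cS x t / F.c x t - F.bS x t / F.b x t| ≤ α)
    (θ : ℝ) (hθ : 0 < θ) (x₁ : ℝ) (hx₁ : x₁ ∈ Ioc 0 x₂) (t₁ : ℝ) (ht₁ : t₁ ∈ Ico t' F.T) :
    min δ (min (1/2) (ε ^ 2)) ≤
      Real.exp (3 * α ^ 2 * (t₁ - t')) * (F.c x₁ t₁ * F.meanH x₁ t₁) + θ * (t₁ - t') := by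
  set μ := min δ (min (1/2) (ε ^ 2)) with hμ
  have hμδ : μ ≤ δ := min_le_left _ _
  have hμ2 : μ ≤ 1/2 := (min_le_right _ _).trans (min_le_left _ _)
  have hμε : μ ≤ ε ^ 2 := (min_le_right _ _).trans (min_le_right _ _)
  set K := 3 * α ^ 2 with hK
  have hK0 : 0 < K := by positivity
  by_contra hcon
  push Not at hcon
  set U : ℝ → ℝ → ℝ := fun x t => F.c x t * F.meanH x t with hU
  have smU : Sm F.T U := F.sm_c.mul F.sm_H
  set v : ℝ → ℝ → ℝ := fun x t => Real.exp (K * (t - t')) * U x t + θ * (t - t') with hv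
  have ht₁0 : t₁ ∈ Ico 0 F.T := ⟨ht'.1.trans ht₁.1, ht₁.2⟩
  have hI : ∀ t ∈ Icc t' t₁, t ∈ Ico 0 F.T := fun t ht => ⟨ht'.1.trans ht.1, ht.2.trans_lt ht₁.2⟩
  have hI' : ∀ t ∈ Icc t' t₁, t ∈ Ico t' F.T := fun t ht => ⟨ht.1, ht.2.trans_lt ht₁.2⟩
  have hU0 : ∀ x > 0, ∀ t ∈ Icc t' t₁, 0 ≤ U x t := fun x hx t ht =>
    mul_nonneg (F.c_pos x hx t (hI t ht)).le (hH x hx t (hI t ht))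
  have hvU : ∀ x > 0, ∀ t ∈ Icc t' t₁, U x t ≤ v x t := by
    intro x hx t ht
    have h0 := hU0 x hx t ht
    have h1 : 0 ≤ t - t' := sub_nonneg.2 ht.1
    have h2 : 1 ≤ Real.exp (K * (t - t')) := Real.one_le_exp (by positivity)
    have h3 : 0 ≤ θ * (t - t') := by positivity
    simp only [hv]
    nlinarith
  obtain ⟨r, hr, hnear⟩ := F.near_origin hBC hbs ht₁0 (show (0:ℝ) < 1/2 by norm_num)
  have hnU : ∀ x ∈ Ioo 0 r, ∀ t ∈ Icc t' t₁, 1/2 ≤ U x t := by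
    intro x hx t ht
    have h1 := (abs_le.1 (hnear x hx t ⟨ht'.1.trans ht.1, ht.2⟩).2).1
    have hb := F.b_pos x hx.1 t (hI t ht)
    have hc := F.c_pos x hx.1 t (hI t ht)
    have hs := hbs x hx.1 t (hI t ht)
    have e : U x t = 2 * F.bS x t * F.c x t / F.b x t + F.cS x t := by
      simp only [hU, WarpedBergerFlow.meanH]
      field_simp
    have : 0 ≤ 2 * F.bS x t * F.c x t / F.b x t := by positivity
    rw [e]; linarith
  set a := min (r / 2) x₁ with ha
  have ha0 : 0 < a := lt_min (by positivity) hx₁.1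
  have har : a < r := (min_le_left _ _).trans_lt (by linarith)
  have hmem₁ : (x₁, t₁) ∈ Icc a x₂ ×ˢ Icc t' t₁ :=
    ⟨⟨min_le_right _ _, hx₁.2⟩, ht₁.1, le_rfl⟩
  have hcv : ContinuousOn (fun p : ℝ × ℝ => v p.1 p.2) (Icc a x₂ ×ˢ Icc t' t₁) := by
    have h1 : ContinuousOn (fun p : ℝ × ℝ => U p.1 p.2) (Icc a x₂ ×ˢ Icc t' t₁) :=
      smU.continuousOn.mono (prod_mono (fun y hy => ha0.trans_le hy.1) hI)
    have h2 : ContinuousOn (fun p : ℝ × ℝ => Real.exp (K * (p.2 - t'))) (Icc a x₂ ×ˢ Icc t' t₁) := by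
      fun_prop
    have h3 : ContinuousOn (fun p : ℝ × ℝ => θ * (p.2 - t')) (Icc a x₂ ×ˢ Icc t' t₁) := by
      fun_prop
    exact (h2.mul h1).add h3
  obtain ⟨⟨y, s⟩, ⟨hy, hs⟩, hmin⟩ := (isCompact_Icc.prod isCompact_Icc).exists_isMinOn
    ⟨(x₁, t₁), hmem₁⟩ hcv
  simp only at hy hs
  have hvlt : v y s < μ := lt_of_le_of_lt (hmin hmem₁) hcon
  have hy0 : 0 < y := ha0.trans_le hy.1
  have hs' := hI s hs
  have hUlt : U y s < μ := (hvU y hy0 s hs).trans_lt hvlt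
  have hya : a < y := by
    rcases hy.1.eq_or_lt with h | h
    · exfalso
      have := hnU y ⟨hy0, h ▸ har⟩ s hs
      linarith
    · exact h
  have hyx : y < x₂ := by
    rcases hy.2.eq_or_lt with h | h
    · exfalso
      have h1 := hlat s (hI' s hs)
      rw [← h] at h1
      simp only [hU] at hUlt
      linarith
    · exact h
  have hst : t' < s := by
    rcases hs.1.eq_or_lt with h | h
    · exfalso
      have h1 := hinit y ⟨hy0, hy.2⟩
      rw [h] at h1
      simp only [hU] at hUlt
      linarith
    · exact h
  have hso : s ∈ Ioo 0 F.T := ⟨ht'.1.trans_lt hst, hs'.2⟩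
  have hb := F.b_pos y hy0 s hs'
  have hc := F.c_pos y hy0 s hs'
  have hξ := F.ξ_pos y hy0 s hs'
  -- spatial derivatives
  have hloc : IsLocalMin (fun z => U z s) y := by
    filter_upwards [Ioo_mem_nhds hya hyx] with z hz
    have h1 : v y s ≤ v z s := hmin (a := (z, s)) ⟨⟨hz.1.le, hz.2.le⟩, hs⟩
    simp only [hv] at h1
    exact le_of_mul_le_mul_left (by linarith) (Real.exp_pos (K * (s - t')))
  have hd1 : ∀ᶠ z in 𝓝 y, HasDerivAt (fun z => U z s)
      (F.ξ z s * (F.cS z s * F.meanH z s + F.c z s * F.HS z s)) z := by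
    filter_upwards [Ioi_mem_nhds hy0] with z hz
    have d : HasDerivAt (fun z => U z s) _ z := (F.hd_c hz hs').mul (F.hd_H hz hs')
    exact d.congr_deriv (by ring)
  have hcrit : F.cS y s * F.meanH y s + F.c y s * F.HS y s = 0 := by
    rcases mul_eq_zero.1 (hloc.hasDerivAt_eq_zero hd1.self_of_nhds) with h | h
    · exact absurd h hξ.ne'
    · exact h
  have hd2 : HasDerivAt (fun z => F.ξ z s * (F.cS z s * F.meanH z s + F.c z s * F.HS z s)) _ y :=
    (F.hd F.sm_ξ hy0 hs').mul
    (((F.hd_cS hy0 hs').mul (F.hd_H hy0 hs')).add ((F.hd_c hy0 hs').mul (F.hd_HS hy0 hs')))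
  have hsec := second_deriv_nonneg hloc hd1 hd2
  rw [hcrit, mul_zero, zero_add] at hsec
  have hss : 0 ≤ F.cSS y s * F.meanH y s + 2 * F.cS y s * F.HS y s + F.c y s * F.HSS y s := by
    have e : F.ξ y s * (F.ξ y s * F.cSS y s * F.meanH y s + F.cS y s * (F.ξ y s * F.HS y s)
        + (F.ξ y s * F.cS y s * F.HS y s + F.c y s * (F.ξ y s * F.HSS y s)))
        = F.ξ y s ^ 2 * (F.cSS y s * F.meanH y s + 2 * F.cS y s * F.HS y s
          + F.c y s * F.HSS y s) := by ring
    rw [e] at hsec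
    exact nonneg_of_mul_nonneg_right hsec (by positivity)
  -- time derivative
  have hUt : HasDerivAt (fun u => U y u) _ s := (F.ht_c hy0 hso).mul (F.ht_H hy0 hso)
  set D := -(F.k03 y s + 2 * F.k13 y s) * F.c y s * F.meanH y s
      + F.c y s * (F.HSS y s + 2 * F.meanH y s * F.HS y s
        + (4 * F.c y s * F.cS y s / F.b y s ^ 4 - 8 * F.c y s ^ 2 * F.bS y s / F.b y s ^ 5
          + 16 * F.bS y s / F.b y s ^ 3)
        - (2 * F.k01 y s + F.k03 y s) * F.meanH y s) with hD
  have hex : HasDerivAt (fun u => Real.exp (K * (u - t'))) (Real.exp (K * (s - t')) * (K * 1)) s :=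
    ((((hasDerivAt_id s).sub_const t').const_mul K)).exp
  have hlin : HasDerivAt (fun u => θ * (u - t')) (θ * 1) s :=
    ((hasDerivAt_id s).sub_const t').const_mul θ
  have hvt : HasDerivAt (fun u => - v y u)
      (-(Real.exp (K * (s - t')) * (K * 1) * U y s + Real.exp (K * (s - t')) * D + θ * 1)) s :=
    ((hex.mul hUt).add hlin).neg
  have hT := deriv_nonneg_of_left_max hst (by
    intro u hu
    have h1 : v y s ≤ v y u := hmin (a := (y, u)) ⟨hy, hu.1, hu.2.trans hs.2⟩
    linarith) hvt
  -- the evolution equation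
  have hid : D = (F.cSS y s * F.meanH y s + 2 * F.cS y s * F.HS y s + F.c y s * F.HSS y s)
      + (3 * F.meanH y s - 2 * (F.cS y s / F.c y s))
        * (F.cS y s * F.meanH y s + F.c y s * F.HS y s)
      + (U y s * (2 * (F.bS y s / F.b y s) ^ 2 - 4 * (F.bS y s / F.b y s) * (F.cS y s / F.c y s)
          + 2 * F.c y s ^ 2 / F.b y s ^ 4)
        + 16 * F.c y s * (F.bS y s / F.b y s) / F.b y s ^ 2
          * (1 - F.c y s ^ 2 / F.b y s ^ 2)) := by
    rw [hD, F.HS_eq hy0 hs']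
    simp only [hU, WarpedBergerFlow.meanH, WarpedBergerFlow.k01, WarpedBergerFlow.k03,
      WarpedBergerFlow.k13]
    field_simp
    ring
  have hz := zeroth_order (u := U y s) (μ := μ) hb hc (div_nonneg (hbs y hy0 s hs') hb.le)
    (hU0 y hy0 s hs) hε hα (hcb y ⟨hy0, hy.2⟩ s (hI' s hs)) (F.ordered hBC hbs hy0 hs')
    (hgrad y ⟨hy0, hy.2⟩ s (hI' s hs))
    (by simp only [hU, WarpedBergerFlow.meanH]; ring) hUlt.le hμε
  rw [hcrit, mul_zero, add_zero] at hid
  have hfin : 0 ≤ D + K * U y s := by rw [hid, hK]; linarith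
  have := mul_nonneg (Real.exp_pos (K * (s - t'))).le hfin
  linarith

/-- for a warped Berger Ricci flow with `T < ∞`, `b_s ≥ 0` and `H ≥ 0`
along the flow, if `c·H ≥ δ` on the lateral and initial parts of the parabolic boundary
of `{0 < x ≤ x̃₂} × [t̃,T)`, `c/b ≥ ε` and `|c_s/c − b_s/b| ≤ α` there, then `c·H` admits
a uniform positive lower bound `μ` on `{0 < x ≤ x̃₂} × [t̃,T)`. -/
theorem warpedBerger_cH_lower_bound (F : WarpedBergerFlow) (hBC : F.BoundedCurvature)
    (hbs : ∀ x > 0, ∀ t ∈ Set.Ico (0:ℝ) F.T, 0 ≤ F.bS x t)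
    (hH : ∀ x > 0, ∀ t ∈ Set.Ico (0:ℝ) F.T, 0 ≤ F.meanH x t)
    (x₂ : ℝ) (hx₂ : 0 < x₂) (δ : ℝ) (hδ : 0 < δ) (t' : ℝ) (ht' : t' ∈ Set.Ico (0:ℝ) F.T)
    (ε : ℝ) (hε : 0 < ε) (α : ℝ) (hα : 0 < α)
    (hlat : ∀ t ∈ Set.Ico t' F.T, δ ≤ F.c x₂ t * F.meanH x₂ t)
    (hinit : ∀ x ∈ Set.Ioc (0:ℝ) x₂, δ ≤ F.c x t' * F.meanH x t')
    (hcb : ∀ x ∈ Set.Ioc (0:ℝ) x₂, ∀ t ∈ Set.Ico t' F.T, ε ≤ F.c x t / F.b x t)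
    (hgrad : ∀ x ∈ Set.Ioc (0:ℝ) x₂, ∀ t ∈ Set.Ico t' F.T,
      |F.cS x t / F.c x t - F.bS x t / F.b x t| ≤ α) :
    ∃ μ > 0, ∀ x ∈ Set.Ioc (0:ℝ) x₂, ∀ t ∈ Set.Ico t' F.T,
      μ ≤ F.c x t * F.meanH x t := by
  refine ⟨min δ (min (1/2) (ε ^ 2)) * Real.exp (-(3 * α ^ 2 * (F.T - t'))), by positivity,
    fun x hx t ht => ?_⟩
  have h := fun θ hθ => cH_weak_bound F hBC hbs hH x₂ δ t' ht' ε hε α hα hlat hinit hcb hgrad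
    θ hθ x hx t ht
  have h1 : min δ (min (1/2) (ε ^ 2)) ≤
      Real.exp (3 * α ^ 2 * (t - t')) * (F.c x t * F.meanH x t) := by
    refine le_of_forall_pos_le_add fun κ hκ => ?_
    have htt : 0 ≤ t - t' := sub_nonneg.2 ht.1
    have h2 := h (κ / (t - t' + 1)) (by positivity)
    have h3 : κ / (t - t' + 1) * (t - t') ≤ κ := by
      rw [div_mul_eq_mul_div, div_le_iff₀ (by positivity)]
      nlinarith
    linarith
  have ht0 : t ∈ Set.Ico (0:ℝ) F.T := ⟨ht'.1.trans ht.1, ht.2⟩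
  have hU0 : 0 ≤ F.c x t * F.meanH x t :=
    mul_nonneg (F.c_pos x hx.1 t ht0).le (hH x hx.1 t ht0)
  rw [Real.exp_neg, ← div_eq_mul_inv, div_le_iff₀ (Real.exp_pos _)]
  refine h1.trans ?_
  rw [mul_comm]
  have h4 : Real.exp (3 * α ^ 2 * (t - t')) ≤ Real.exp (3 * α ^ 2 * (F.T - t')) := by
    have := ht.2.le
    gcongr
  gcongr
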